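/- Let 𝒪 be a polynomial ring over a field k of characteristic zero, 𝔥 ⊆ 𝔤 complete intersection ideals of grades p and n, with 𝒪/𝔤 reduced and Spec(𝒪/𝔤) connected, and the localization of 𝒪/𝔥 at (the image of) every minimal prime of 𝔤 a regular local ring. Suppose 𝔤 is generated by an 𝒪-regular sequence g₁,…,g_n and 𝔥 by h₁,…,h_p with h_i ≡ Σ_{j=1}^p b_{ij} g_j mod 𝔤². Then ∫_𝔥 𝔤 = (g₁,…,g_p) + (g_{p+1},…,g_n)². -/

import Mathlib

open Ideal

/-- `ξ ∈ Der_h(O)`: the derivation `ξ` preserves the ideal `h`. -/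
def PreservesIdeal {k O : Type*} [CommRing k] [CommRing O] [Algebra k O]
    (h : Ideal O) (xi : Derivation k O O) : Prop :=
  ∀ x ∈ h, xi x ∈ h

/-- The primitive ideal `∫_h g` of `g` relative to `h`: all `f ∈ g` such that
`ξ f ∈ g` for every derivation `ξ` preserving `h`. -/
def primitiveIdeal (k : Type*) {O : Type*} [CommRing k] [CommRing O] [Algebra k O]
    (h g : Ideal O) : Ideal O where
  carrier := {f | f ∈ g ∧ ∀ xi : Derivation k O O, PreservesIdeal h xi → xi f ∈ g}
  add_mem' := fun {a b} ha hb =>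
    ⟨g.add_mem ha.1 hb.1, fun xi hxi => by
      rw [map_add]; exact g.add_mem (ha.2 xi hxi) (hb.2 xi hxi)⟩
  zero_mem' := ⟨g.zero_mem, fun xi _ => by simp⟩
  smul_mem' := fun c f hf =>
    ⟨g.smul_mem c hf.1, fun xi hxi => by
      rw [smul_eq_mul, Derivation.leibniz]
      exact g.add_mem (g.smul_mem _ (hf.2 xi hxi))
        (by rw [smul_eq_mul]; exact Ideal.mul_mem_right _ g hf.1)⟩

/-- The set of elements of `g` whose class in the conormal module `M = g/(g² + h)` is a
torsion element over `O/g`, i.e. is killed by a non-zero-divisor of `O/g`.  This is the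
preimage in `O` of the torsion submodule `T(M)` of `M`. -/
def torsionSet {O : Type*} [CommRing O] (h g : Ideal O) : Set O :=
  {f | f ∈ g ∧ ∃ β : O,
    Ideal.Quotient.mk g β ∈ nonZeroDivisors (O ⧸ g) ∧ β * f ∈ g ^ 2 ⊔ h}

/-- A regular local ring: a noetherian local ring whose maximal ideal can be generated by
Krull-dimension many elements. -/
def IsRegularLocal (R : Type*) [CommRing R] : Prop :=
  IsNoetherianRing R ∧ IsLocalRing R ∧ ∃ s : Finset R,
    (Ideal.span (s : Set R)).IsMaximal ∧ (s.card : WithBot ℕ∞) = ringKrullDim R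

/-- The localization of `R` at a prime ideal (with the primality assumption explicit). -/
abbrev locAt {R : Type*} [CommRing R] (q : Ideal R) (hq : q.IsPrime) : Type _ :=
  @Localization.AtPrime R _ q hq

/-- The localization of `O/h` at the image of the prime `p` is a regular local ring. -/
def regularAtImage {O : Type*} [CommRing O] (h p : Ideal O) : Prop :=
  ∀ hP : (p.map (Ideal.Quotient.mk h)).IsPrime,
    IsRegularLocal (locAt (p.map (Ideal.Quotient.mk h)) hP)

/-- The `(t+1)`-st through `n`-th members `g_{t+1}, …, g_n` of a family `g_1, …, g_n`. -/
def tailFam {O : Type*} {n : ℕ} (gs : Fin n → O) (t : ℕ) (j : Fin (n - t)) : O :=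
  gs ⟨t + (j : ℕ), by have := j.isLt; omega⟩

/-!
Let `q` be a minimal prime of `g` and `κ` its residue field. The quotients of `O_q` by the regular
sequences `hs` and `gs` are regular local rings (the second one is a field), so each of the two
families is linearly independent in the cotangent space of `O_q`; as `κ` is formally smooth over
`k`, there are derivations `O → κ` dual to it. Evaluating the congruences
`hs i ≡ ∑ j, b i j * gs j` on the derivations dual to `hs` shows that `det b` is invertible in
every such `κ`, hence a nonzerodivisor modulo `g`; by Cramer's rule it multiplies `g₁, …, g_p` into
`g ^ 2 ⊔ h`, so these are torsion in the conormal module and lie in the primitive ideal.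

Conversely, for `j > p` the derivation dual to `g_j` kills `hs`, and a multiple of it by an element
outside `q` lifts to a derivation of `O` killing `hs`, which therefore preserves `h`. If
`∑ l, c l * gs l` is in the primitive ideal, this derivation shows `c j ∈ q` for every `q`; as
`O ⧸ g` is reduced, `c j ∈ g`.
-/

section RegularLocal

open IsLocalRing

theorem IsRegularLocal.isRegularLocalRing {R : Type*} [CommRing R] (hR : IsRegularLocal R) :
    IsRegularLocalRing R := by
  obtain ⟨_, _, s, hs, hcard⟩ := hR
  refine .of_spanFinrank_maximalIdeal_le _ ?_
  rw [← eq_maximalIdeal hs, ← hcard, Nat.cast_le, ← Set.ncard_coe_finset]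
  exact Submodule.spanFinrank_span_le_ncard_of_finite s.finite_toSet

theorem isRegularLocal_of_isField {R : Type*} [CommRing R] (hR : IsField R) :
    IsRegularLocal R := by
  let := hR.toField
  refine ⟨inferInstance, inferInstance, ∅, ?_, ?_⟩
  · simpa using Ideal.bot_isMaximal (K := R)
  · simp [ringKrullDim_eq_zero_of_field]

theorem span_union_eq_comap_of_ker_eq_span {R A : Type*} [CommRing R] [CommRing A] {f : R →+* A}
    (hf : Function.Surjective f) {s : Set R} (hker : RingHom.ker f = Ideal.span s) (t : Set R) :
    Ideal.span (s ∪ t) = (Ideal.span (f '' t)).comap f := by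
  rw [Ideal.span_union, ← Ideal.map_span, Ideal.comap_map_of_surjective f hf,
    ← RingHom.ker_eq_comap_bot, hker, sup_comm]

variable {S : Type*} [CommRing S] [IsLocalRing S] [IsNoetherianRing S]

theorem linearIndependent_toCotangent_of_card_le_ringKrullDim {ι : Type*} [Fintype ι]
    (x : ι → maximalIdeal S)
    (hspan : Ideal.span (Set.range fun i => (x i : S)) = maximalIdeal S)
    (hcard : (Fintype.card ι : WithBot ℕ∞) ≤ ringKrullDim S) :
    LinearIndependent (ResidueField S) fun i => (maximalIdeal S).toCotangent (x i) := by
  apply linearIndependent_of_top_le_span_of_card_le_finrank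
  · have hspan_top : Submodule.span S (Set.range x) = ⊤ := by
      apply Submodule.map_injective_of_injective (maximalIdeal S).injective_subtype
      rw [Submodule.map_span, Submodule.map_top, Submodule.range_subtype, ← Set.range_comp]
      exact hspan
    exact (Set.range_comp _ x ▸ CotangentSpace.span_image_eq_top_iff.mpr hspan_top).ge
  · rw [← spanFinrank_maximalIdeal_eq_finrank_cotangentSpace]
    exact_mod_cast hcard.trans (ringKrullDim_le_spanFinrank_maximalIdeal S)

theorem linearIndependent_toCotangent_of_isRegularLocalRing_quotient {r : ℕ}
    (x : Fin r → maximalIdeal S)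
    (hreg : RingTheory.Sequence.IsRegular S (List.ofFn fun i => (x i : S)))
    [IsRegularLocalRing (S ⧸ Ideal.span (Set.range fun i => (x i : S)))] :
    LinearIndependent (ResidueField S) fun i => (maximalIdeal S).toCotangent (x i) := by
  set I := Ideal.span (Set.range fun i => (x i : S)) with hI
  obtain ⟨t, ht_card, ht_span⟩ := Submodule.FG.exists_span_finset_card_eq_spanFinrank
    (maximalIdeal (S ⧸ I)).fg_of_isNoetherianRing
  have := IsLocalHom.of_surjective (Ideal.Quotient.mk I) Ideal.Quotient.mk_surjective
  choose lift hlift using Ideal.Quotient.mk_surjective (I := I)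
  have hlift_mem (a : t) : lift a ∈ maximalIdeal S := by
    rw [← maximalIdeal_comap (Ideal.Quotient.mk I), Ideal.mem_comap, hlift, ← ht_span]
    exact Submodule.subset_span a.2
  -- `x` together with lifts of minimal generators of the maximal ideal of `S ⧸ I` generates the
  -- maximal ideal of `S`, and this family has exactly `dim S` members.
  let y : Fin r ⊕ t → maximalIdeal S := Sum.elim x fun a => ⟨lift a, hlift_mem a⟩
  have hy_span : Ideal.span (Set.range fun i => (y i : S)) = maximalIdeal S := by
    have hy_eq : (fun i => (y i : S)) = Sum.elim (fun i => (x i : S)) fun a : t => lift a := by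
      ext (i | a) <;> rfl
    have hlift_image : Ideal.Quotient.mk I '' (Set.range fun a : t => lift a) = t := by
      ext a
      simp [hlift]
    rw [hy_eq, Set.Sum.elim_range,
      span_union_eq_comap_of_ker_eq_span Ideal.Quotient.mk_surjective (Ideal.mk_ker.trans hI),
      hlift_image, ← submodule_span_eq, ht_span, maximalIdeal_comap]
  have hy_card : (Fintype.card (Fin r ⊕ t) : WithBot ℕ∞) ≤ ringKrullDim S := by
    have hofList : Ideal.ofList (List.ofFn fun i => (x i : S)) = I := by
      simp [hI, Ideal.ofList, Set.range, List.mem_ofFn']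
    rw [← ringKrullDim_add_length_eq_ringKrullDim_of_isRegular _ hreg, hofList,
      ← IsRegularLocalRing.spanFinrank_maximalIdeal, ← ht_card]
    simp [add_comm]
  exact (linearIndependent_toCotangent_of_card_le_ringKrullDim y hy_span hy_card).comp
    Sum.inl Sum.inl_injective

end RegularLocal

section Localization

variable {R : Type*} [CommRing R]

theorem isLocalization_quotient_map_of_le (I q : Ideal R) [q.IsPrime] (hIq : I ≤ q)
    [hP : (q.map (Ideal.Quotient.mk I)).IsPrime] :
    IsLocalization.AtPrime
      (Localization.AtPrime q ⧸ I.map (algebraMap R (Localization.AtPrime q)))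
      (q.map (Ideal.Quotient.mk I)) := by
  have : (q.map (Ideal.Quotient.mk I)).LiesOver q := ⟨by
    rw [Ideal.under_def, Ideal.Quotient.algebraMap_eq, Ideal.comap_map_quotientMk,
      sup_eq_right.mpr hIq]⟩
  rw [IsLocalization.AtPrime, ← Ideal.algebraMapSubmonoid_primeCompl_of_liesOver_surjective
    (p := q) (P := q.map (Ideal.Quotient.mk I)) Ideal.Quotient.mk_surjective]
  infer_instance

theorem regularAtImage.isRegularLocalRing_quotient_map {I q : Ideal R} [q.IsPrime] (hIq : I ≤ q)
    (hreg : regularAtImage I q) :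
    IsRegularLocalRing
      (Localization.AtPrime q ⧸ I.map (algebraMap R (Localization.AtPrime q))) := by
  have hP : (q.map (Ideal.Quotient.mk I)).IsPrime :=
    Ideal.isPrime_map_quotientMk_of_isPrime hIq
  have := (hreg hP).isRegularLocalRing
  have := isLocalization_quotient_map_of_le I q hIq
  exact .of_ringEquiv (IsLocalization.algEquiv (q.map (Ideal.Quotient.mk I)).primeCompl
    (locAt _ hP) _).toRingEquiv

theorem regularAtImage_of_mem_minimalPrimes {I q : Ideal R} [IsReduced (R ⧸ I)]
    (hq : q ∈ I.minimalPrimes) : regularAtImage I q := by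
  intro hP
  have hmin : q.map (Ideal.Quotient.mk I) ∈ minimalPrimes (R ⧸ I) := by
    change _ ∈ (⊥ : Ideal (R ⧸ I)).minimalPrimes
    rw [← Ideal.map_quotient_self I,
      Ideal.minimalPrimes_map_of_surjective Ideal.Quotient.mk_surjective, Ideal.mk_ker, sup_idem]
    exact Set.mem_image_of_mem _ hq
  have := Ring.KrullDimLE.of_isLocalization _ hmin (locAt _ hP)
  exact isRegularLocal_of_isField Ring.KrullDimLE.isField_of_isReduced

theorem linearIndependent_toCotangent_of_regularAtImage [IsNoetherianRing R] (q : Ideal R)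
    [q.IsPrime] {r : ℕ} (x : Fin r → R) (hxq : Ideal.span (Set.range x) ≤ q)
    (hseq : RingTheory.Sequence.IsWeaklyRegular R (List.ofFn x))
    (hreg : regularAtImage (Ideal.span (Set.range x)) q)
    (y : Fin r → IsLocalRing.maximalIdeal (Localization.AtPrime q))
    (hy : ∀ i, algebraMap R (Localization.AtPrime q) (x i) = y i) :
    LinearIndependent (IsLocalRing.ResidueField (Localization.AtPrime q)) fun i =>
      (IsLocalRing.maximalIdeal (Localization.AtPrime q)).toCotangent (y i) := by
  have hmem (i) : x i ∈ q := hxq (Ideal.subset_span (Set.mem_range_self i))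
  have := regularAtImage.isRegularLocalRing_quotient_map hxq hreg
  have hspan : (Ideal.span (Set.range x)).map (algebraMap R (Localization.AtPrime q)) =
      Ideal.span (Set.range fun i => (y i : Localization.AtPrime q)) := by
    rw [Ideal.map_span, ← Set.range_comp, ← funext hy]
    rfl
  rw [hspan] at this
  have := hseq.isRegular_of_isLocalization_of_mem (Localization.AtPrime q) q
    (by simpa [List.mem_ofFn'])
  refine linearIndependent_toCotangent_of_isRegularLocalRing_quotient y ?_
  rwa [List.map_ofFn, Function.comp_def, funext hy] at this

end Localization

section DualDerivations

/-- The derivations `δ i` are dual to the elements `x j`, that is, the matrix `(δ i (x j))` is the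
identity. -/
def IsDualFamily {k O κ ι : Type*} [CommRing k] [CommRing O] [CommRing κ] [Algebra k O]
    [Algebra k κ] [Algebra O κ] [DecidableEq ι] (δ : ι → Derivation k O κ) (x : ι → O) : Prop :=
  ∀ i j, δ i (x j) = if i = j then 1 else 0

theorem exists_derivation_eq_toCotangent {k S A : Type*} [CommRing k] [CommRing S] [CommRing A]
    [Algebra k S] [Algebra S A] [Algebra k A] [IsScalarTower k S A]
    [Algebra.FormallySmooth k S] [Algebra.FormallySmooth k A]
    (hA : Function.Surjective (algebraMap S A)) {I : Ideal S}
    (hI : RingHom.ker (algebraMap S A) = I) :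
    ∃ δ : Derivation k S I.Cotangent, ∀ x : I, δ x = I.toCotangent x := by
  subst hI
  -- Formal smoothness of `A` splits the conormal sequence `I ⧸ I² → A ⊗ Ω[S⁄k] → Ω[A⁄k]`.
  obtain ⟨l, hl⟩ := (Algebra.FormallySmooth.iff_split_injection (R := k) hA).mp inferInstance
  refine ⟨(l ∘ₗ TensorProduct.mk S A _ 1).compDer (KaehlerDifferential.D k S), fun x => ?_⟩
  have hlx := LinearMap.congr_fun hl ((RingHom.ker (algebraMap S A)).toCotangent x)
  rwa [LinearMap.comp_apply, KaehlerDifferential.kerCotangentToTensor_toCotangent] at hlx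

open IsLocalRing in
theorem exists_isDualFamily_of_linearIndependent_toCotangent {k S ι : Type*} [CommRing k]
    [CommRing S] [IsLocalRing S] [Algebra k S] [Algebra.FormallySmooth k S]
    [Algebra.FormallySmooth k (ResidueField S)] [DecidableEq ι] (y : ι → maximalIdeal S)
    (hy : LinearIndependent (ResidueField S) fun i => (maximalIdeal S).toCotangent (y i)) :
    ∃ δ : ι → Derivation k S (ResidueField S), IsDualFamily δ fun i => (y i : S) := by
  obtain ⟨δ, hδ⟩ :=
    exists_derivation_eq_toCotangent (k := k) residue_surjective (ker_residue (R := S))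
  obtain ⟨coord, hcoord⟩ := LinearMap.exists_leftInverse_of_injective _
    (LinearMap.ker_eq_bot.mpr hy)
  refine ⟨fun i => ((Finsupp.lapply i ∘ₗ coord).restrictScalars S).compDer δ, fun i j => ?_⟩
  have := LinearMap.congr_fun hcoord (Finsupp.single j 1)
  rw [LinearMap.comp_apply, Finsupp.linearCombination_single, one_smul] at this
  change coord (δ (y j)) i = _
  rw [hδ, this]
  simp [Finsupp.single_apply, eq_comm]

theorem exists_isDualFamily_of_regularAtImage {k O : Type*} [Field k] [PerfectField k]
    [CommRing O] [Algebra k O] [Algebra.FormallySmooth k O] [Algebra.EssFiniteType k O]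
    (q : Ideal O) [q.IsPrime] {r : ℕ} (x : Fin r → O) (hxq : Ideal.span (Set.range x) ≤ q)
    (hseq : RingTheory.Sequence.IsWeaklyRegular O (List.ofFn x))
    (hreg : regularAtImage (Ideal.span (Set.range x)) q) :
    ∃ δ : Fin r → Derivation k O q.ResidueField, IsDualFamily δ x := by
  have := Algebra.EssFiniteType.isNoetherianRing k O
  have : Algebra.EssFiniteType k q.ResidueField := .comp k O _
  have : Algebra.FormallySmooth k q.ResidueField := .of_perfectField
  have : Algebra.FormallySmooth O (Localization.AtPrime q) := .of_isLocalization q.primeCompl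
  have : Algebra.FormallySmooth k (Localization.AtPrime q) := .comp k O _
  let y (i : Fin r) : IsLocalRing.maximalIdeal (Localization.AtPrime q) :=
    ⟨algebraMap O _ (x i), (IsLocalization.AtPrime.to_map_mem_maximal_iff _ q _).mpr
      (hxq (Ideal.subset_span (Set.mem_range_self i)))⟩
  obtain ⟨δ, hδ⟩ := exists_isDualFamily_of_linearIndependent_toCotangent (k := k) y
    (linearIndependent_toCotangent_of_regularAtImage q x hxq hseq hreg y fun _ => rfl)
  exact ⟨fun i => (δ i).compAlgebraMap O, hδ⟩

end DualDerivations

section Lifting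

theorem exists_linearMap_lift_residueField {O M : Type*} [CommRing O] [AddCommGroup M]
    [Module O M] [Module.FinitePresentation O M] [Module.Projective O M] (q : Ideal O) [q.IsPrime]
    (ε : M →ₗ[O] q.ResidueField) :
    ∃ s ∉ q, ∃ l : M →ₗ[O] O,
      ∀ x, algebraMap O q.ResidueField (l x) = algebraMap O q.ResidueField s * ε x := by
  obtain ⟨ε', hε'⟩ := Module.projective_lifting_property
    (IsScalarTower.toAlgHom O (Localization.AtPrime q) q.ResidueField).toLinearMap ε
    IsLocalRing.residue_surjective
  obtain ⟨l, s, hl⟩ := Module.FinitePresentation.exists_lift_of_isLocalizedModule q.primeCompl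
    (Algebra.linearMap O (Localization.AtPrime q)) ε'
  refine ⟨s, s.2, l, fun x => ?_⟩
  have hlx : algebraMap O (Localization.AtPrime q) (l x) = s • ε' x := LinearMap.congr_fun hl x
  rw [IsScalarTower.algebraMap_apply O (Localization.AtPrime q) q.ResidueField, hlx, ← hε',
    ← Algebra.smul_def]
  exact map_smul (IsScalarTower.toAlgHom O (Localization.AtPrime q) q.ResidueField) (s : O) _

variable {k O : Type*} [CommRing k] [CommRing O] [Algebra k O]

theorem exists_derivation_lift_residueField [Module.FinitePresentation O Ω[O⁄k]]
    [Module.Projective O Ω[O⁄k]] {q : Ideal O} [q.IsPrime] (ε : Derivation k O q.ResidueField) :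
    ∃ s ∉ q, ∃ ξ : Derivation k O O,
      ∀ x, algebraMap O q.ResidueField (ξ x) = algebraMap O q.ResidueField s * ε x := by
  obtain ⟨s, hs, l, hl⟩ := exists_linearMap_lift_residueField q ε.liftKaehlerDifferential
  refine ⟨s, hs, l.compDer (KaehlerDifferential.D k O), fun x => ?_⟩
  simpa using hl (KaehlerDifferential.D k O x)

/-- Given derivations `D l` and elements `x i`, the derivation `det A • E - ∑ l, w l • D l` with
`A = (D l (x i))` and `w` chosen by Cramer's rule so that every `x i` is killed. -/
def cramerDerivation {ι : Type*} [Fintype ι] [DecidableEq ι] (D : ι → Derivation k O O)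
    (E : Derivation k O O) (x : ι → O) : Derivation k O O :=
  let A : Matrix ι ι O := Matrix.of fun i l => D l (x i)
  A.det • E - ∑ l, A.adjugate.mulVec (fun i => E (x i)) l • D l

section Cramer

variable {ι : Type*} [Fintype ι] [DecidableEq ι] (D : ι → Derivation k O O)
  (E : Derivation k O O) (x : ι → O)

theorem cramerDerivation_apply (f : O) :
    cramerDerivation D E x f = (Matrix.of fun i l => D l (x i)).det * E f -
      ∑ l, (Matrix.of fun i l => D l (x i)).adjugate.mulVec (fun i => E (x i)) l * D l f := by
  have hsum (ξ : ι → Derivation k O O) : (∑ l, ξ l) f = ∑ l, ξ l f :=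
    map_sum ((Pi.evalAddMonoidHom _ f).comp Derivation.coeFnAddMonoidHom) ξ Finset.univ
  simp [cramerDerivation, hsum]

theorem cramerDerivation_apply_self (i : ι) : cramerDerivation D E x (x i) = 0 := by
  set A : Matrix ι ι O := Matrix.of fun i l => D l (x i) with hA
  have hcramer : A.mulVec (A.adjugate.mulVec fun i => E (x i)) = A.det • fun i => E (x i) := by
    rw [Matrix.mulVec_mulVec, Matrix.mul_adjugate, Matrix.smul_mulVec, Matrix.one_mulVec]
  rw [cramerDerivation_apply, ← hA, sub_eq_zero, ← smul_eq_mul,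
    ← Pi.smul_apply A.det (fun i => E (x i)), ← hcramer]
  exact Finset.sum_congr rfl fun l _ => mul_comm _ _

end Cramer

theorem exists_derivation_lift_apply_eq_zero [Module.FinitePresentation O Ω[O⁄k]]
    [Module.Projective O Ω[O⁄k]] {q : Ideal O} [q.IsPrime] {ι : Type*} [Finite ι] [DecidableEq ι]
    {x : ι → O} {δ : ι → Derivation k O q.ResidueField} (hδ : IsDualFamily δ x)
    (ε : Derivation k O q.ResidueField) (hε : ∀ i, ε (x i) = 0) :
    ∃ s ∉ q, ∃ ξ : Derivation k O O, (∀ i, ξ (x i) = 0) ∧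
      ∀ f, algebraMap O q.ResidueField (ξ f) = algebraMap O q.ResidueField s * ε f := by
  cases nonempty_fintype ι
  choose a ha D hD using fun i => exists_derivation_lift_residueField (δ i)
  obtain ⟨s, hs, E, hE⟩ := exists_derivation_lift_residueField ε
  set φ := algebraMap O q.ResidueField
  set A : Matrix ι ι O := Matrix.of fun i l => D l (x i) with hA
  have hA_diagonal : φ.mapMatrix A = Matrix.diagonal fun i => φ (a i) := by
    ext i l
    have hDx : φ (D l (x i)) = φ (a l) * if l = i then 1 else 0 := by rw [hD, hδ]
    by_cases h : i = l
    · simp [hA, h, h ▸ hDx]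
    · simp [hA, h, Ne.symm h, hDx]
  have hdet : A.det ∉ q := by
    rw [← Ideal.algebraMap_residueField_eq_zero, RingHom.map_det, hA_diagonal, Matrix.det_diagonal,
      ← map_prod, Ideal.algebraMap_residueField_eq_zero, Ideal.IsPrime.prod_mem_iff]
    simpa using ha
  refine ⟨A.det * s, ‹q.IsPrime›.mul_notMem hdet hs, cramerDerivation D E x,
    cramerDerivation_apply_self D E x, fun f => ?_⟩
  have hEx (i) : φ (E (x i)) = 0 := by rw [hE, hε, mul_zero]
  rw [cramerDerivation_apply, ← hA]
  simp [Matrix.mulVec, dotProduct, hEx, hE, mul_assoc, φ]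

end Lifting

section Congruence

variable {k O M : Type*} [CommRing k] [CommRing O] [Algebra k O] [AddCommGroup M] [Module O M]
  [Module k M]

theorem derivation_apply_mem_smul_top (ξ : Derivation k O M) {g : Ideal O} {x : O}
    (hx : x ∈ g ^ 2) : ξ x ∈ g • (⊤ : Submodule O M) := by
  rw [pow_two] at hx
  induction hx using Submodule.mul_induction_on' with
  | mem_mul_mem a ha b hb =>
    rw [Derivation.leibniz]
    exact add_mem (Submodule.smul_mem_smul ha trivial) (Submodule.smul_mem_smul hb trivial)
  | add a _ b _ ha hb =>
    rw [map_add]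
    exact add_mem ha hb

theorem derivation_apply_mem_of_mem_sq (ξ : Derivation k O O) {g : Ideal O} {x : O}
    (hx : x ∈ g ^ 2) : ξ x ∈ g := by
  simpa using derivation_apply_mem_smul_top ξ hx

variable {g : Ideal O} {ι : Type*} [Fintype ι]

theorem derivation_apply_eq_sum_smul (hM : g ≤ Module.annihilator O M)
    (ε : Derivation k O M) {c y : ι → O} (hy : ∀ j, y j ∈ g) :
    ε (∑ j, c j * y j) = ∑ j, c j • ε (y j) := by
  simp [map_sum, Derivation.leibniz, Module.mem_annihilator.mp (hM (hy _))]

theorem derivation_apply_eq_sum_smul_of_sub_mem_sq (hM : g ≤ Module.annihilator O M)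
    (ε : Derivation k O M) {x : O} {c y : ι → O} (hy : ∀ j, y j ∈ g)
    (hx : x - ∑ j, c j * y j ∈ g ^ 2) : ε x = ∑ j, c j • ε (y j) := by
  have hgM : g • (⊤ : Submodule O M) = ⊥ :=
    Submodule.le_annihilator_iff.mp (Submodule.annihilator_top (R := O) (M := M) ▸ hM)
  have hsq := derivation_apply_mem_smul_top ε hx
  rw [hgM, Submodule.mem_bot, map_sub, sub_eq_zero] at hsq
  rw [hsq, derivation_apply_eq_sum_smul hM ε hy]

theorem det_mul_mem_sup_sq [DecidableEq ι] {h : Ideal O} {x y : ι → O} {b : ι → ι → O}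
    (hx : ∀ i, x i ∈ h) (hcong : ∀ i, x i - ∑ j, b i j * y j ∈ g ^ 2) (j : ι) :
    (Matrix.of b).det * y j ∈ g ^ 2 ⊔ h := by
  have hcramer : (Matrix.of b).det * y j =
      ∑ i, (Matrix.of b).adjugate j i * ∑ l, b i l * y l := by
    have : (Matrix.of b).adjugate.mulVec ((Matrix.of b).mulVec y) = (Matrix.of b).det • y := by
      rw [Matrix.mulVec_mulVec, Matrix.adjugate_mul, Matrix.smul_mulVec, Matrix.one_mulVec]
    exact (congrFun this j).symm
  rw [hcramer]
  refine sum_mem fun i _ => Ideal.mul_mem_left _ _ ?_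
  rw [← sub_sub_cancel (x i) (∑ l, b i l * y l)]
  exact sub_mem (Ideal.mem_sup_right (hx i)) (Ideal.mem_sup_left (hcong i))

theorem isUnit_algebraMap_det_of_isDualFamily {κ : Type*} [CommRing κ] [Algebra k κ] [Algebra O κ]
    [DecidableEq ι] (hκ : g ≤ Module.annihilator O κ) {x y : ι → O} {b : ι → ι → O}
    (hy : ∀ j, y j ∈ g) (hcong : ∀ i, x i - ∑ j, b i j * y j ∈ g ^ 2)
    {δ : ι → Derivation k O κ} (hδ : IsDualFamily δ x) :
    IsUnit (algebraMap O κ (Matrix.of b).det) := by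
  rw [RingHom.map_det]
  refine Matrix.isUnit_det_of_right_inverse (B := Matrix.of fun j l => δ l (y j)) ?_
  ext i l
  have := derivation_apply_eq_sum_smul_of_sub_mem_sq hκ (δ l) hy (hcong i)
  rw [hδ] at this
  simpa [Matrix.mul_apply, Algebra.smul_def, Matrix.one_apply, eq_comm] using this.symm

end Congruence

section PrimitiveIdeal

variable {k O : Type*} [CommRing k] [CommRing O] [Algebra k O] {h g : Ideal O}

theorem preservesIdeal_span_of_apply_eq_zero {ι : Type*} {x : ι → O} {ξ : Derivation k O O}
    (hξ : ∀ i, ξ (x i) = 0) : PreservesIdeal (Ideal.span (Set.range x)) ξ := by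
  intro f hf
  induction hf using Submodule.span_induction with
  | mem _ hf =>
    obtain ⟨i, rfl⟩ := hf
    rw [hξ]
    exact zero_mem _
  | zero => simp
  | add _ _ _ _ hf₁ hf₂ => simpa using add_mem hf₁ hf₂
  | smul a f hf hξf =>
    rw [smul_eq_mul, Derivation.leibniz]
    exact add_mem (Ideal.mul_mem_left _ _ hξf) (Ideal.mul_mem_right _ _ hf)

theorem sq_le_primitiveIdeal : g ^ 2 ≤ primitiveIdeal k h g := fun _ hf =>
  ⟨Ideal.pow_le_self two_ne_zero hf, fun ξ _ => derivation_apply_mem_of_mem_sq ξ hf⟩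

theorem torsionSet_subset_primitiveIdeal (hle : h ≤ g) :
    torsionSet h g ⊆ primitiveIdeal k h g := by
  rintro f ⟨hf, β, hβ, hβf⟩
  refine ⟨hf, fun ξ hξ => ?_⟩
  have hξβf : ξ (β * f) ∈ g := by
    obtain ⟨u, hu, w, hw, huw⟩ := Submodule.mem_sup.mp hβf
    rw [← huw, map_add]
    exact add_mem (derivation_apply_mem_of_mem_sq ξ hu) (hle (hξ w hw))
  rw [Derivation.leibniz, smul_eq_mul, smul_eq_mul,
    Submodule.add_mem_iff_left _ (Ideal.mul_mem_right _ _ hf),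
    ← Ideal.Quotient.eq_zero_iff_mem, map_mul] at hξβf
  exact Ideal.Quotient.eq_zero_iff_mem.mp ((mul_left_mem_nonZeroDivisors_eq_zero_iff hβ).mp hξβf)

theorem mem_of_forall_mem_minimalPrimes [IsReduced (O ⧸ g)] {f : O}
    (hf : ∀ q ∈ g.minimalPrimes, f ∈ q) : f ∈ g := by
  rw [← ((Ideal.isRadical_iff_quotient_reduced g).mpr inferInstance).radical,
    ← Ideal.sInf_minimalPrimes, Ideal.mem_sInf]
  exact fun {q} => hf q

theorem mk_mem_nonZeroDivisors_of_forall_notMem_minimalPrimes [IsReduced (O ⧸ g)] {β : O}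
    (hβ : ∀ q ∈ g.minimalPrimes, β ∉ q) : Ideal.Quotient.mk g β ∈ nonZeroDivisors (O ⧸ g) := by
  rw [mem_nonZeroDivisors_iff_left]
  intro a ha
  obtain ⟨f, rfl⟩ := Ideal.Quotient.mk_surjective a
  rw [← map_mul, Ideal.Quotient.eq_zero_iff_mem] at ha
  rw [Ideal.Quotient.eq_zero_iff_mem]
  exact mem_of_forall_mem_minimalPrimes fun q hq =>
    (hq.1.1.mem_or_mem (hq.1.2 ha)).resolve_left (hβ q hq)

theorem le_annihilator_residueField {q : Ideal O} [q.IsPrime] (hgq : g ≤ q) :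
    g ≤ Module.annihilator O q.ResidueField := fun x hx =>
  Module.mem_annihilator.mpr fun a => by
    rw [Algebra.smul_def, Ideal.algebraMap_residueField_eq_zero.mpr (hgq hx), zero_mul]

theorem span_le_primitiveIdeal_of_sub_mem_sq [IsReduced (O ⧸ g)] (hle : h ≤ g) {ι : Type*}
    [Fintype ι] [DecidableEq ι] {x y : ι → O} {b : ι → ι → O} (hx : ∀ i, x i ∈ h)
    (hy : ∀ j, y j ∈ g) (hcong : ∀ i, x i - ∑ j, b i j * y j ∈ g ^ 2)
    (hdual : ∀ (q : Ideal O) [q.IsPrime], q ∈ g.minimalPrimes →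
      ∃ δ : ι → Derivation k O q.ResidueField, IsDualFamily δ x) :
    Ideal.span (Set.range y) ≤ primitiveIdeal k h g := by
  rw [Ideal.span_le]
  rintro _ ⟨j, rfl⟩
  refine torsionSet_subset_primitiveIdeal hle ⟨hy j, (Matrix.of b).det,
    mk_mem_nonZeroDivisors_of_forall_notMem_minimalPrimes fun q hq hdet => ?_,
    det_mul_mem_sup_sq hx hcong j⟩
  have := hq.1.1
  obtain ⟨δ, hδ⟩ := hdual q hq
  exact (isUnit_algebraMap_det_of_isDualFamily (le_annihilator_residueField hq.1.2) hy hcong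
    hδ).ne_zero (Ideal.algebraMap_residueField_eq_zero.mpr hdet)

variable {p n : ℕ} (hpn : p ≤ n) {x : Fin p → O} {y : Fin n → O} {b : Fin p → Fin p → O}

theorem mem_of_sum_mul_mem_primitiveIdeal [Module.FinitePresentation O Ω[O⁄k]]
    [Module.Projective O Ω[O⁄k]] {q : Ideal O} [q.IsPrime] (hgq : g ≤ q) (hy : ∀ j, y j ∈ g)
    (hcong : ∀ i, x i - ∑ j, b i j * y (Fin.castLE hpn j) ∈ g ^ 2)
    {δ : Fin p → Derivation k O q.ResidueField} (hδ : IsDualFamily δ x)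
    {ε : Fin n → Derivation k O q.ResidueField} (hε : IsDualFamily ε y) {c : Fin n → O}
    (hc : ∑ j, c j * y j ∈ primitiveIdeal k (Ideal.span (Set.range x)) g) {j : Fin n}
    (hj : p ≤ j) : c j ∈ q := by
  have hann := le_annihilator_residueField hgq
  have hεx (i) : ε j (x i) = 0 := by
    rw [derivation_apply_eq_sum_smul_of_sub_mem_sq hann (ε j) (fun _ => hy _) (hcong i)]
    refine Finset.sum_eq_zero fun l _ => ?_
    have hjl : j ≠ Fin.castLE hpn l := by
      rintro rfl
      exact (Nat.not_lt.mpr hj) l.isLt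
    rw [hε, if_neg hjl, smul_zero]
  have hεc : ε j (∑ l, c l * y l) = algebraMap O q.ResidueField (c j) := by
    rw [derivation_apply_eq_sum_smul hann (ε j) hy]
    simp [hε j _, Algebra.smul_def]
  obtain ⟨s, hs, ξ, hξx, hξ⟩ := exists_derivation_lift_apply_eq_zero hδ (ε j) hεx
  have hξc : ξ (∑ l, c l * y l) ∈ q := hgq (hc.2 ξ (preservesIdeal_span_of_apply_eq_zero hξx))
  rw [← Ideal.algebraMap_residueField_eq_zero, hξ, hεc, ← map_mul,
    Ideal.algebraMap_residueField_eq_zero] at hξc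
  exact (‹q.IsPrime›.mem_or_mem hξc).resolve_left hs

theorem span_range_eq_sup_tailFam (y : Fin n → O) :
    Ideal.span (Set.range y) = Ideal.span (Set.range fun j : Fin p => y (Fin.castLE hpn j)) ⊔
      Ideal.span (Set.range (tailFam y p)) := by
  rw [← Ideal.span_union]
  congr 1
  ext f
  constructor
  · rintro ⟨j, rfl⟩
    by_cases hj : (j : ℕ) < p
    · exact Or.inl ⟨⟨j, hj⟩, rfl⟩
    · exact Or.inr ⟨⟨j - p, by omega⟩, congrArg y (Fin.ext (Nat.add_sub_of_le (not_lt.mp hj)))⟩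
  · rintro (⟨j, rfl⟩ | ⟨j, rfl⟩)
    · exact ⟨_, rfl⟩
    · exact ⟨_, rfl⟩

theorem sum_mul_mem_sup_sq_tailFam {c : Fin n → O}
    (hc : ∀ j : Fin n, p ≤ j → c j ∈ Ideal.span (Set.range y)) :
    ∑ j, c j * y j ∈ Ideal.span (Set.range fun j : Fin p => y (Fin.castLE hpn j)) ⊔
      Ideal.span (Set.range (tailFam y p)) ^ 2 := by
  refine sum_mem fun j _ => ?_
  rcases lt_or_ge (j : ℕ) p with hj | hj
  · exact Ideal.mem_sup_left (Ideal.mul_mem_left _ _ (Ideal.subset_span ⟨⟨j, hj⟩, rfl⟩))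
  · have hyj : y j ∈ Ideal.span (Set.range (tailFam y p)) :=
      Ideal.subset_span ⟨⟨j - p, by omega⟩, congrArg y (Fin.ext (Nat.add_sub_of_le hj))⟩
    have hcj := hc j hj
    rw [span_range_eq_sup_tailFam hpn y] at hcj
    obtain ⟨u, hu, w, hw, huw⟩ := Submodule.mem_sup.mp hcj
    rw [← huw, add_mul, pow_two]
    exact add_mem (Ideal.mem_sup_left (Ideal.mul_mem_right _ _ hu))
      (Ideal.mem_sup_right (Ideal.mul_mem_mul hw hyj))

theorem primitiveIdeal_le_sup_sq_tailFam [Module.FinitePresentation O Ω[O⁄k]]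
    [Module.Projective O Ω[O⁄k]] [IsReduced (O ⧸ Ideal.span (Set.range y))]
    (hcong : ∀ i, x i - ∑ j, b i j * y (Fin.castLE hpn j) ∈ Ideal.span (Set.range y) ^ 2)
    (hdual_x : ∀ (q : Ideal O) [q.IsPrime], q ∈ (Ideal.span (Set.range y)).minimalPrimes →
      ∃ δ : Fin p → Derivation k O q.ResidueField, IsDualFamily δ x)
    (hdual_y : ∀ (q : Ideal O) [q.IsPrime], q ∈ (Ideal.span (Set.range y)).minimalPrimes →
      ∃ ε : Fin n → Derivation k O q.ResidueField, IsDualFamily ε y) :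
    primitiveIdeal k (Ideal.span (Set.range x)) (Ideal.span (Set.range y)) ≤
      Ideal.span (Set.range fun j : Fin p => y (Fin.castLE hpn j)) ⊔
        Ideal.span (Set.range (tailFam y p)) ^ 2 := by
  intro f hf
  obtain ⟨c, rfl⟩ := Ideal.mem_span_range_iff_exists_fun.mp hf.1
  refine sum_mul_mem_sup_sq_tailFam hpn fun j hj => mem_of_forall_mem_minimalPrimes fun q hq => ?_
  have := hq.1.1
  obtain ⟨δ, hδ⟩ := hdual_x q hq
  obtain ⟨ε, hε⟩ := hdual_y q hq
  exact mem_of_sum_mul_mem_primitiveIdeal hpn hq.1.2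
    (fun j => Ideal.subset_span (Set.mem_range_self j)) hcong hδ hε hf hj

end PrimitiveIdeal

theorem statement14_general {k O : Type*} [Field k] [PerfectField k] [CommRing O] [Algebra k O]
    [Algebra.FormallySmooth k O] [Algebra.EssFiniteType k O] (h g : Ideal O) (hle : h ≤ g)
    [IsReduced (O ⧸ g)] {p n : ℕ} (hpn : p ≤ n) (hs : Fin p → O) (gs : Fin n → O)
    (hhseq : RingTheory.Sequence.IsWeaklyRegular O (List.ofFn hs))
    (hhgen : h = Ideal.span (Set.range hs))
    (hgseq : RingTheory.Sequence.IsWeaklyRegular O (List.ofFn gs))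
    (hggen : g = Ideal.span (Set.range gs))
    (hreg : ∀ q ∈ g.minimalPrimes, regularAtImage h q) (b : Fin p → Fin p → O)
    (hcong : ∀ i : Fin p, hs i - ∑ j, b i j * gs (Fin.castLE hpn j) ∈ g ^ 2) :
    primitiveIdeal k h g =
      Ideal.span (Set.range fun j : Fin p => gs (Fin.castLE hpn j)) ⊔
        (Ideal.span (Set.range (tailFam gs p))) ^ 2 := by
  have := Algebra.EssFiniteType.isNoetherianRing k O
  have := Module.finitePresentation_of_finite O Ω[O⁄k]
  subst hhgen hggen
  have hdual_hs (q : Ideal O) [q.IsPrime] (hq : q ∈ (Ideal.span (Set.range gs)).minimalPrimes) :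
      ∃ δ : Fin p → Derivation k O q.ResidueField, IsDualFamily δ hs :=
    exists_isDualFamily_of_regularAtImage q hs (hle.trans hq.1.2) hhseq (hreg q hq)
  have hdual_gs (q : Ideal O) [q.IsPrime] (hq : q ∈ (Ideal.span (Set.range gs)).minimalPrimes) :
      ∃ ε : Fin n → Derivation k O q.ResidueField, IsDualFamily ε gs :=
    exists_isDualFamily_of_regularAtImage q gs hq.1.2 hgseq (regularAtImage_of_mem_minimalPrimes hq)
  have hhead : Ideal.span (Set.range fun j : Fin p => gs (Fin.castLE hpn j)) ≤
      primitiveIdeal k (Ideal.span (Set.range hs)) (Ideal.span (Set.range gs)) :=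
    span_le_primitiveIdeal_of_sub_mem_sq hle (fun i => Ideal.subset_span (Set.mem_range_self i))
      (fun _ => Ideal.subset_span (Set.mem_range_self _)) hcong hdual_hs
  have htail : Ideal.span (Set.range (tailFam gs p)) ≤ Ideal.span (Set.range gs) :=
    span_range_eq_sup_tailFam hpn gs ▸ le_sup_right
  exact le_antisymm (primitiveIdeal_le_sup_sq_tailFam hpn hcong hdual_hs hdual_gs)
    (sup_le hhead ((Ideal.pow_right_mono htail 2).trans sq_le_primitiveIdeal))

/-- Proposition `free1`, part 4): `∫_h g = (g₁, …, g_p) + (g_{p+1}, …, gₙ)²`. -/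
theorem statement14 {k : Type*} [Field k] [CharZero k] {m : ℕ}
    (h g : Ideal (MvPolynomial (Fin m) k)) (hle : h ≤ g)
    [IsReduced (MvPolynomial (Fin m) k ⧸ g)]
    [ConnectedSpace (PrimeSpectrum (MvPolynomial (Fin m) k ⧸ g))]
    {p n : ℕ} (hpn : p ≤ n)
    (hs : Fin p → MvPolynomial (Fin m) k) (gs : Fin n → MvPolynomial (Fin m) k)
    (hhseq : RingTheory.Sequence.IsRegular (MvPolynomial (Fin m) k) (List.ofFn hs))
    (hhgen : h = Ideal.span (Set.range hs))
    (hgseq : RingTheory.Sequence.IsRegular (MvPolynomial (Fin m) k) (List.ofFn gs))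
    (hggen : g = Ideal.span (Set.range gs))
    (hreg : ∀ q ∈ g.minimalPrimes, regularAtImage h q)
    (b : Fin p → Fin p → MvPolynomial (Fin m) k)
    (hcong : ∀ i : Fin p, hs i - ∑ j, b i j * gs (Fin.castLE hpn j) ∈ g ^ 2) :
    primitiveIdeal k h g =
      Ideal.span (Set.range fun j : Fin p => gs (Fin.castLE hpn j)) ⊔
        (Ideal.span (Set.range (tailFam gs p))) ^ 2 :=
  statement14_general h g hle hpn hs gs hhseq.toIsWeaklyRegular hhgen hgseq.toIsWeaklyRegular hggen
    hreg b hcong
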